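/- arXiv:math/0207054 — 4 statements merged into one kernel-verified Lean document; each statement's English description precedes it below -/
import Mathlib

section
/- The scalar curvature function H₂ is monotone on the cone Γ₂: for every κ ∈ Γ₂ one has H(κ) > 0 and H(κ) − κᵢ > 0 for every index i, i.e. all partial derivatives ∂H₂/∂κᵢ are strictly positive on Γ₂. -/
/-!
Where `H₂ > 0`, the identity `H² = 2 H₂ + Σⱼ κⱼ²` gives `|κᵢ| < |H|` and `H ≠ 0`. On the connected
set `Γ₂` the continuous function `H` therefore keeps the sign it has at `(1, …, 1)`, and
`∂H₂/∂κᵢ = H − κᵢ ≥ |H| − |κᵢ| > 0`.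
-/

noncomputable section

/-- `H κ = Σᵢ κᵢ`. -/
def Hsum {n : ℕ} (κ : Fin n → ℝ) : ℝ := ∑ i, κ i

/-- `H₂ κ = ½(H(κ)² − Σᵢ κᵢ²)`. -/
def H2 {n : ℕ} (κ : Fin n → ℝ) : ℝ := (Hsum κ ^ 2 - ∑ i, κ i ^ 2) / 2

/-- `Γ₂ ⊆ ℝⁿ` is the connected component of `{H₂ > 0}` containing the positive cone. -/
def Gamma2 (n : ℕ) : Set (Fin n → ℝ) :=
  connectedComponentIn {κ : Fin n → ℝ | 0 < H2 κ} (fun _ => 1)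

section

variable {n : ℕ}

theorem continuous_Hsum : Continuous (Hsum : (Fin n → ℝ) → ℝ) := by
  unfold Hsum
  fun_prop

theorem H2_pos_iff {κ : Fin n → ℝ} : 0 < H2 κ ↔ ∑ i, κ i ^ 2 < Hsum κ ^ 2 := by
  rw [H2, div_pos_iff_of_pos_right two_pos, sub_pos]

theorem Hsum_ne_zero_of_H2_pos {κ : Fin n → ℝ} (hκ : 0 < H2 κ) : Hsum κ ≠ 0 := by
  have hsum_nonneg : 0 ≤ ∑ i, κ i ^ 2 := Finset.sum_nonneg fun i _ => sq_nonneg (κ i)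
  exact sq_pos_iff.mp (hsum_nonneg.trans_lt (H2_pos_iff.mp hκ))

theorem abs_apply_lt_abs_Hsum_of_H2_pos {κ : Fin n → ℝ} (hκ : 0 < H2 κ) (i : Fin n) :
    |κ i| < |Hsum κ| :=
  sq_lt_sq.mp <| calc
    κ i ^ 2 ≤ ∑ j, κ j ^ 2 :=
      Finset.single_le_sum (fun j _ => sq_nonneg (κ j)) (Finset.mem_univ i)
    _ < Hsum κ ^ 2 := H2_pos_iff.mp hκ

theorem hasFDerivAt_H2 (κ : Fin n → ℝ) :
    HasFDerivAt H2 (∑ i, (Hsum κ - κ i) • (.proj i : (Fin n → ℝ) →L[ℝ] ℝ)) κ := by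
  have hproj (i : Fin n) :
      HasFDerivAt (fun x : Fin n → ℝ => x i) (.proj i : (Fin n → ℝ) →L[ℝ] ℝ) κ :=
    hasFDerivAt_apply i κ
  have hHsum : HasFDerivAt Hsum (∑ i, (.proj i : (Fin n → ℝ) →L[ℝ] ℝ)) κ :=
    HasFDerivAt.fun_sum fun i _ => hproj i
  have hsum_sq := HasFDerivAt.fun_sum (u := Finset.univ) fun i _ => (hproj i).pow 2
  refine (((hHsum.pow 2).fun_sub hsum_sq).mul_const (2⁻¹ : ℝ)).congr_fderiv ?_
  ext v
  simp [sub_mul, Finset.sum_sub_distrib, ← Finset.mul_sum, mul_assoc, mul_sub]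

theorem fderiv_H2_single (κ : Fin n → ℝ) (i : Fin n) :
    fderiv ℝ H2 κ (Pi.single i 1) = Hsum κ - κ i := by
  simp [(hasFDerivAt_H2 κ).fderiv, Pi.single_apply]

theorem H2_pos_of_mem_Gamma2 {κ : Fin n → ℝ} (hκ : κ ∈ Gamma2 n) : 0 < H2 κ :=
  connectedComponentIn_subset {κ | 0 < H2 κ} _ hκ

theorem Hsum_pos_of_mem_Gamma2 {κ : Fin n → ℝ} (hκ : κ ∈ Gamma2 n) : 0 < Hsum κ := by
  have hone_mem : (fun _ => 1) ∈ Gamma2 n :=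
    mem_connectedComponentIn (connectedComponentIn_nonempty_iff.mp ⟨κ, hκ⟩)
  have hne (x : Fin n → ℝ) (hx : x ∈ Gamma2 n) : Hsum x ≠ 0 :=
    Hsum_ne_zero_of_H2_pos (H2_pos_of_mem_Gamma2 hx)
  have hone_nonneg : 0 ≤ Hsum (fun _ : Fin n => 1) := Finset.sum_nonneg fun _ _ => zero_le_one
  have hone_pos : 0 < Hsum (fun _ : Fin n => 1) := hone_nonneg.lt_of_ne' (hne _ hone_mem)
  exact isPreconnected_connectedComponentIn.lt_of_ne continuous_Hsum.continuousOn hne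
    ⟨_, hone_mem, hone_pos⟩ hκ

theorem apply_lt_Hsum_of_mem_Gamma2 {κ : Fin n → ℝ} (hκ : κ ∈ Gamma2 n) (i : Fin n) :
    κ i < Hsum κ := calc
  κ i ≤ |κ i| := le_abs_self (κ i)
  _ < |Hsum κ| := abs_apply_lt_abs_Hsum_of_H2_pos (H2_pos_of_mem_Gamma2 hκ) i
  _ = Hsum κ := abs_of_pos (Hsum_pos_of_mem_Gamma2 hκ)

end

/-- `H₂` is monotone on `Γ₂`: for `κ ∈ Γ₂` one has `H(κ) > 0` and
`H(κ) − κᵢ > 0` for every `i`, i.e. all partial derivatives `∂H₂/∂κᵢ` are strictly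
positive on `Γ₂`. -/
theorem stmt2 {n : ℕ} (hn : 2 ≤ n) (κ : Fin n → ℝ) (hκ : κ ∈ Gamma2 n) :
    0 < Hsum κ ∧ (∀ i, 0 < Hsum κ - κ i) ∧
    ∀ i, 0 < fderiv ℝ H2 κ (Pi.single i 1) := by
  have hsub_pos (i : Fin n) : 0 < Hsum κ - κ i := sub_pos.mpr (apply_lt_Hsum_of_mem_Gamma2 hκ i)
  exact ⟨Hsum_pos_of_mem_Gamma2 hκ, hsub_pos, fun i => (fderiv_H2_single κ i).symm ▸ hsub_pos i⟩
end
end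

section
/- Let Γ ⊆ ℝⁿ be an open cone, and let F be continuous on the closure of Γ, C¹ on Γ, with F > 0 on Γ, F = 0 on ∂Γ, ∂F/∂κᵢ > 0 on Γ for every i, and H(κ) = Σᵢκᵢ > 0 for all κ ∈ Γ. Then for every ε > 0 one has Γ ⊆ Γ_ε, i.e. κ + εH(κ)(1,…,1) ∈ Γ for every κ ∈ Γ, and moreover H(κ) > 0 for every κ ∈ Γ_ε. -/
/-!
Starting at `κ ∈ Γ` and moving in the direction `(1,…,1)`, the function `F` does not decrease while
the ray stays in `Γ`, its derivative in that direction being the sum of its partial derivatives. At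
a first exit point, which lies on `∂Γ`, continuity would give `0 < F κ ≤ F (exit point) = 0`. Hence
the ray never leaves `Γ`, and `φ_ε(κ)` lies on it because `ε H(κ) > 0`. The second claim follows
from `H(φ_ε(κ)) = (1 + nε) H(κ)`.
-/

noncomputable section

/-- `φ_ε(κ) = (κᵢ + εH(κ))ᵢ`, so that `Γ_ε = φ_ε⁻¹(Γ)`. -/
def phi (ε : ℝ) {n : ℕ} (κ : Fin n → ℝ) : Fin n → ℝ := fun i => κ i + ε * Hsum κ

open Set

section FirstExit

variable {α X : Type*} [ConditionallyCompleteLinearOrder α] [DenselyOrdered α]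
  [TopologicalSpace α] [OrderTopology α] [TopologicalSpace X]

theorem exists_first_mem_frontier {g : α → X} {U : Set X} {a b : α} (hU : IsOpen U) (hab : a ≤ b)
    (hg : ContinuousOn g (Icc a b)) (ha : g a ∈ U) (hb : g b ∉ U) :
    ∃ c ∈ Ioc a b, g c ∈ frontier U ∧ ∀ t ∈ Ico a c, g t ∈ U := by
  have outside_closed : IsClosed (Icc a b ∩ g ⁻¹' Uᶜ) :=
    hg.preimage_isClosed_of_isClosed isClosed_Icc hU.isClosed_compl
  obtain ⟨c, ⟨hc, hcU⟩, hc_least⟩ :=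
    (isCompact_Icc.of_isClosed_subset outside_closed inter_subset_left).exists_isLeast
      ⟨b, right_mem_Icc.2 hab, hb⟩
  have hac : a < c := hc.1.lt_of_ne fun h => hcU (h ▸ ha)
  have before_exit : ∀ t ∈ Ico a c, g t ∈ U := fun t ht => by
    by_contra htU
    exact (hc_least ⟨⟨ht.1, ht.2.le.trans hc.2⟩, htU⟩).not_gt ht.2
  have hc_closure : g c ∈ closure U := by
    refine ((hg c hc).mono ?_).mem_closure (s := Ico a c) ?_ before_exit
    · exact Ico_subset_Icc_self.trans (Icc_subset_Icc_right hc.2)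
    · exact closure_Ico hac.ne ▸ right_mem_Icc.2 hac.le
  exact ⟨c, ⟨hac, hc.2⟩, hU.frontier_eq ▸ ⟨hc_closure, hcU⟩, before_exit⟩

end FirstExit

section Ray

variable {E : Type*} [NormedAddCommGroup E] [NormedSpace ℝ E] {f : E → ℝ} {x v : E}

theorem monotoneOn_add_smul_of_fderiv_nonneg {s : Set ℝ} (hs : Convex ℝ s)
    (hfc : ContinuousOn (fun t : ℝ => f (x + t • v)) s)
    (hfd : ∀ t ∈ interior s, DifferentiableAt ℝ f (x + t • v))
    (hf' : ∀ t ∈ interior s, 0 ≤ fderiv ℝ f (x + t • v) v) :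
    MonotoneOn (fun t : ℝ => f (x + t • v)) s := by
  refine monotoneOn_of_hasDerivWithinAt_nonneg hs hfc (fun t ht => ?_) hf'
  have hline : HasDerivAt (fun t : ℝ => x + t • v) v t := by
    simpa only [one_smul] using ((hasDerivAt_id' t).smul_const v).const_add x
  exact ((hfd t ht).hasFDerivAt.comp_hasDerivAt t hline).hasDerivWithinAt

theorem add_smul_mem_of_fderiv_nonneg {U : Set E} (hU : IsOpen U)
    (hfc : ContinuousOn f (closure U)) (hfd : DifferentiableOn ℝ f U)
    (hf_frontier : ∀ y ∈ frontier U, f y ≤ 0) (hf' : ∀ y ∈ U, 0 ≤ fderiv ℝ f y v)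
    (hx : x ∈ U) (hfx : 0 < f x) {s : ℝ} (hs : 0 ≤ s) : x + s • v ∈ U := by
  by_contra hsU
  have hray : Continuous fun t : ℝ => x + t • v := by fun_prop
  obtain ⟨c, ⟨hc, -⟩, hc_frontier, hcU⟩ :=
    exists_first_mem_frontier hU hs hray.continuousOn (by simpa using hx) hsU
  have hc_closure : ∀ t ∈ Icc 0 c, x + t • v ∈ closure U := fun t ht =>
    hray.continuousWithinAt.mem_closure (s := Ico 0 c) (closure_Ico hc.ne ▸ ht) hcU
  have hU_interior : ∀ t ∈ interior (Icc 0 c), x + t • v ∈ U := fun t ht =>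
    hcU t (Ioo_subset_Ico_self (interior_Icc.subset ht))
  have hmono : MonotoneOn (fun t : ℝ => f (x + t • v)) (Icc 0 c) :=
    monotoneOn_add_smul_of_fderiv_nonneg (convex_Icc 0 c)
      (hfc.comp hray.continuousOn hc_closure)
      (fun t ht => hfd.differentiableAt (hU.mem_nhds (hU_interior t ht)))
      (fun t ht => hf' _ (hU_interior t ht))
  have hle : f x ≤ f (x + c • v) := by
    simpa using hmono (left_mem_Icc.2 hc.le) (right_mem_Icc.2 hc.le) hc.le
  exact hfx.not_ge (hle.trans (hf_frontier _ hc_frontier))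

end Ray

theorem map_one_nonneg_of_map_single_nonneg {ι R M 𝓕 : Type*} [Finite ι] [DecidableEq ι]
    [AddCommMonoidWithOne R] [AddCommMonoid M] [PartialOrder M] [IsOrderedAddMonoid M]
    [FunLike 𝓕 (ι → R) M] [AddMonoidHomClass 𝓕 (ι → R) M] {L : 𝓕}
    (hL : ∀ i, 0 ≤ L (Pi.single i 1)) : 0 ≤ L 1 := by
  cases nonempty_fintype ι
  rw [← Finset.univ_sum_single (1 : ι → R), map_sum]
  exact Finset.sum_nonneg fun i _ => hL i

section EllipticRegularization

variable {n : ℕ} (ε : ℝ) (κ : Fin n → ℝ)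

theorem phi_eq_add_smul_one : phi ε κ = κ + (ε * Hsum κ) • (1 : Fin n → ℝ) := by
  ext i
  simp [phi]

theorem Hsum_phi : Hsum (phi ε κ) = (1 + n * ε) * Hsum κ := by
  simp only [Hsum, phi, Finset.sum_add_distrib, Finset.sum_const, Finset.card_univ,
    Fintype.card_fin, nsmul_eq_mul]
  ring

end EllipticRegularization

theorem stmt4_general {n : ℕ} {Γ : Set (Fin n → ℝ)} (hopen : IsOpen Γ) {F : (Fin n → ℝ) → ℝ}
    (hFc : ContinuousOn F (closure Γ)) (hFd : DifferentiableOn ℝ F Γ)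
    (hFpos : ∀ κ ∈ Γ, 0 < F κ) (hF_frontier : ∀ κ ∈ frontier Γ, F κ ≤ 0)
    (hF' : ∀ κ ∈ Γ, 0 ≤ fderiv ℝ F κ 1) (hH : ∀ κ ∈ Γ, 0 < Hsum κ) {ε : ℝ} (hε : 0 ≤ ε) :
    (∀ κ ∈ Γ, phi ε κ ∈ Γ) ∧ (∀ κ : Fin n → ℝ, phi ε κ ∈ Γ → 0 < Hsum κ) := by
  refine ⟨fun κ hκ => ?_, fun κ hκ => ?_⟩
  · rw [phi_eq_add_smul_one]
    exact add_smul_mem_of_fderiv_nonneg hopen hFc hFd hF_frontier hF' hκ (hFpos κ hκ)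
      (mul_nonneg hε (hH κ hκ).le)
  · have hpos : 0 < (1 + n * ε) * Hsum κ := Hsum_phi ε κ ▸ hH _ hκ
    exact pos_of_mul_pos_right hpos (by positivity)

/-- let `Γ` be an open cone, `F` continuous on `closure Γ`, `C¹` on `Γ`,
positive on `Γ`, vanishing on `∂Γ`, with strictly positive partial derivatives on `Γ`, and
`H > 0` on `Γ`.  Then for every `ε > 0`: `Γ ⊆ Γ_ε`, i.e. `κ + εH(κ)(1,…,1) ∈ Γ` for every
`κ ∈ Γ`, and `H(κ) > 0` for every `κ ∈ Γ_ε`. -/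
theorem stmt4 {n : ℕ} (Γ : Set (Fin n → ℝ)) (hopen : IsOpen Γ)
    (hcone : ∀ κ ∈ Γ, ∀ t : ℝ, 0 < t → t • κ ∈ Γ)
    (F : (Fin n → ℝ) → ℝ)
    (hFc : ContinuousOn F (closure Γ))
    (hFd : ContDiffOn ℝ 1 F Γ)
    (hFpos : ∀ κ ∈ Γ, 0 < F κ)
    (hFzero : ∀ κ ∈ frontier Γ, F κ = 0)
    (hFmono : ∀ κ ∈ Γ, ∀ i, 0 < fderiv ℝ F κ (Pi.single i 1))
    (hH : ∀ κ ∈ Γ, 0 < Hsum κ)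
    (ε : ℝ) (hε : 0 < ε) :
    (∀ κ ∈ Γ, phi ε κ ∈ Γ) ∧ (∀ κ : Fin n → ℝ, phi ε κ ∈ Γ → 0 < Hsum κ) :=
  stmt4_general hopen hFc (hFd.differentiableOn one_ne_zero) hFpos (fun κ hκ => (hFzero κ hκ).le)
    (fun κ hκ => map_one_nonneg_of_map_single_nonneg fun i => (hFmono κ hκ i).le) hH hε.le
end
end

section
/- Let Γ ⊆ ℝⁿ be an open convex cone that is invariant under permutations of the coordinates, and let F ∈ C²(Γ) be positive and symmetric (invariant under permutations of its arguments), with ∂F/∂κᵢ > 0 on Γ for all i, and such that log F is concave on Γ. Let κ ∈ Γ and let i₀ be an index such that κ_{i₀} is either negative or equal to the smallest component of κ. Then Σᵢ ∂F/∂κᵢ(κ)·κᵢ² ≥ (1/n)·(Σᵢ ∂F/∂κᵢ(κ))·κ_{i₀}². -/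
noncomputable section

/-!
A point `x` and its image `y` under the transposition of `i` and `j` carry the same value of `F`,
and `y - x = (x j - x i) (eᵢ - eⱼ)`. Log-concavity makes `F` quasi-concave, so `F ≥ F x` on the
segment from `x` to `y` and the derivative along `y - x` is nonnegative:
`(x j - x i) (∂ᵢF - ∂ⱼF) ≥ 0`; if `x i = x j`, symmetry alone gives `∂ᵢF = ∂ⱼF`. Hence the smallest
coordinate `κ m` carries the largest partial derivative, which is at least the average of all of
them, and the single term `∂ₘF κₘ²` already dominates the left-hand side; if `κ i₀ < 0` then
`κ m ≤ κ i₀ < 0`, so `κ i₀ ^ 2 ≤ κ m ^ 2`.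
-/

open scoped Topology

lemma quasiconcaveOn_of_concaveOn_log {E : Type*} [AddCommMonoid E] [Module ℝ E] {s : Set E}
    {f : E → ℝ} (hpos : ∀ x ∈ s, 0 < f x) (hlog : ConcaveOn ℝ s fun x => Real.log (f x)) :
    QuasiconcaveOn ℝ s f := by
  refine quasiconcaveOn_iff_min_le.2 ⟨hlog.1, fun x hx y hy a b ha hb hab => ?_⟩
  have hz := hpos _ (hlog.1 hx hy ha hb hab)
  have hmin := (quasiconcaveOn_iff_min_le.1 hlog.quasiconcaveOn).2 hx hy ha hb hab
  simpa only [min_le_iff, Real.log_le_log_iff (hpos x hx) hz,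
    Real.log_le_log_iff (hpos y hy) hz] using hmin

lemma le_of_mem_segment_of_quasiconcaveOn {𝕜 E β : Type*} [Semiring 𝕜] [PartialOrder 𝕜]
    [AddCommMonoid E] [SMul 𝕜 E] [Preorder β] {s : Set E} {f : E → β}
    (hf : QuasiconcaveOn 𝕜 s f) {x y z : E} (hx : x ∈ s) (hy : y ∈ s) (hxy : f x ≤ f y)
    (hz : z ∈ segment 𝕜 x y) : f x ≤ f z :=
  ((hf (f x)).segment_subset ⟨hx, le_rfl⟩ ⟨hy, hxy⟩ hz).2

lemma hasFDerivWithinAt_sub_nonneg_of_quasiconcaveOn {E : Type*} [NormedAddCommGroup E]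
    [NormedSpace ℝ E] {s : Set E} {f : E → ℝ} {f' : E →L[ℝ] ℝ} {x y : E}
    (hf : QuasiconcaveOn ℝ s f) (hf' : HasFDerivWithinAt f f' s x) (hx : x ∈ s) (hy : y ∈ s)
    (hxy : f x ≤ f y) : 0 ≤ f' (y - x) := by
  have hmin : IsMinOn f (segment ℝ x y) x := fun z hz =>
    le_of_mem_segment_of_quasiconcaveOn hf hx hy hxy hz
  have hseg : segment ℝ x y ⊆ s := hf.convex.segment_subset hx hy
  exact hmin.localize.hasFDerivWithinAt_nonneg (hf'.mono hseg)
    (sub_mem_posTangentConeAt_of_segment_subset subset_rfl)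

lemma comp_swap_sub_self {ι R : Type*} [DecidableEq ι] [Ring R] (x : ι → R) (i j : ι) :
    x ∘ Equiv.swap i j - x = (x j - x i) • (Pi.single i 1 - Pi.single j 1) := by
  ext k
  rcases eq_or_ne k i with rfl | hki
  · rcases eq_or_ne k j with rfl | hkj <;> simp [*]
  · rcases eq_or_ne k j with rfl | hkj
    · simp [hki]
    · simp [hki, hkj, Equiv.swap_apply_of_ne_of_ne]

section Permutation

variable {ι : Type*} [Finite ι]

lemma fderiv_apply_comp_perm_of_eventuallyEq {𝕜 G : Type*} [NontriviallyNormedField 𝕜]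
    [NormedAddCommGroup G] [NormedSpace 𝕜 G] {f : (ι → 𝕜) → G} {x : ι → 𝕜} (σ : Equiv.Perm ι)
    (hf : (fun z => f (z ∘ σ)) =ᶠ[𝓝 x] f) (hx : x ∘ σ = x) (v : ι → 𝕜) :
    fderiv 𝕜 f x (v ∘ σ) = fderiv 𝕜 f x v := by
  have := Fintype.ofFinite ι
  let L : (ι → 𝕜) ≃L[𝕜] (ι → 𝕜) := ContinuousLinearEquiv.piCongrLeft 𝕜 (fun _ => 𝕜) σ.symm
  have hL (z : ι → 𝕜) : L z = z ∘ σ := by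
    ext i
    obtain ⟨k, rfl⟩ := σ.symm.surjective i
    exact (Equiv.piCongrLeft_apply_apply (fun _ => 𝕜) σ.symm z k).trans (by simp)
  have hfL : f ∘ L =ᶠ[𝓝 x] f := by simpa only [Function.comp_def, hL] using hf
  calc fderiv 𝕜 f x (v ∘ σ) = fderiv 𝕜 (f ∘ L) x v := by
        rw [L.comp_right_fderiv, ContinuousLinearMap.comp_apply, ContinuousLinearEquiv.coe_coe,
          hL, hL, hx]
    _ = fderiv 𝕜 f x v := by rw [hfL.fderiv_eq]

lemma fderiv_single_le_fderiv_single_of_quasiconcaveOn [DecidableEq ι] {s : Set (ι → ℝ)}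
    {f : (ι → ℝ) → ℝ} {x : ι → ℝ} {i j : ι} (hf : QuasiconcaveOn ℝ s f)
    (hd : DifferentiableAt ℝ f x) (hx : x ∈ s) (hswap : x ∘ Equiv.swap i j ∈ s)
    (hsymm : (fun z => f (z ∘ Equiv.swap i j)) =ᶠ[𝓝 x] f) (hij : x i ≤ x j) :
    fderiv ℝ f x (Pi.single j 1) ≤ fderiv ℝ f x (Pi.single i 1) := by
  have := Fintype.ofFinite ι
  rcases hij.eq_or_lt with heq | hlt
  · have hfix : x ∘ Equiv.swap i j = x := by
      rw [← sub_eq_zero, comp_swap_sub_self, heq, sub_self, zero_smul]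
    have hinv := fderiv_apply_comp_perm_of_eventuallyEq _ hsymm hfix (Pi.single i 1)
    rw [Pi.single_comp_equiv, Equiv.symm_swap, Equiv.swap_apply_left] at hinv
    exact hinv.le
  · have hnonneg := hasFDerivWithinAt_sub_nonneg_of_quasiconcaveOn hf
      hd.hasFDerivAt.hasFDerivWithinAt hx hswap hsymm.self_of_nhds.ge
    rw [comp_swap_sub_self, map_smul, map_sub, smul_eq_mul] at hnonneg
    exact sub_nonneg.1 (nonneg_of_mul_nonneg_right hnonneg (sub_pos.2 hlt))

end Permutation

lemma one_div_card_mul_sum_mul_le_sum_mul {ι K : Type*} [Fintype ι] [Field K] [LinearOrder K]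
    [IsStrictOrderedRing K] {w b : ι → K} {c : K} {m : ι} (hw : ∀ i, 0 ≤ w i)
    (hwm : ∀ i, w i ≤ w m) (hb : ∀ i, 0 ≤ b i) (hc : c ≤ b m) :
    1 / (Fintype.card ι : K) * (∑ i, w i) * c ≤ ∑ i, w i * b i := by
  have hcard : (0 : K) < Fintype.card ι := Nat.cast_pos.2 (Fintype.card_pos_iff.2 ⟨m⟩)
  have hsum : ∑ i, w i ≤ Fintype.card ι * w m := by
    simpa only [Finset.card_univ, nsmul_eq_mul] using
      Finset.sum_le_card_nsmul Finset.univ w (w m) fun i _ => hwm i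
  have hmean_nonneg : 0 ≤ 1 / (Fintype.card ι : K) * ∑ i, w i :=
    mul_nonneg (one_div_nonneg.2 hcard.le) (Finset.sum_nonneg fun i _ => hw i)
  have hmean_le : 1 / (Fintype.card ι : K) * ∑ i, w i ≤ w m := by
    rwa [one_div, inv_mul_le_iff₀ hcard]
  calc 1 / (Fintype.card ι : K) * (∑ i, w i) * c
      ≤ 1 / (Fintype.card ι : K) * (∑ i, w i) * b m := mul_le_mul_of_nonneg_left hc hmean_nonneg
    _ ≤ w m * b m := mul_le_mul_of_nonneg_right hmean_le (hb m)
    _ ≤ ∑ i, w i * b i :=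
        Finset.single_le_sum (f := fun i => w i * b i)
          (fun i _ => mul_nonneg (hw i) (hb i)) (Finset.mem_univ m)

theorem stmt12_general {ι : Type*} [Fintype ι] [DecidableEq ι] {Γ : Set (ι → ℝ)}
    (hopen : IsOpen Γ) (hperm : ∀ σ : Equiv.Perm ι, ∀ κ ∈ Γ, κ ∘ σ ∈ Γ) {F : (ι → ℝ) → ℝ}
    (hFsym : ∀ σ : Equiv.Perm ι, ∀ κ ∈ Γ, F (κ ∘ σ) = F κ) (hF : QuasiconcaveOn ℝ Γ F)
    {κ : ι → ℝ} (hκ : κ ∈ Γ) (hd : DifferentiableAt ℝ F κ)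
    (hFmono : ∀ i, 0 ≤ fderiv ℝ F κ (Pi.single i 1)) {i₀ : ι}
    (hi₀ : κ i₀ < 0 ∨ ∀ j, κ i₀ ≤ κ j) :
    1 / (Fintype.card ι : ℝ) * (∑ i, fderiv ℝ F κ (Pi.single i 1)) * κ i₀ ^ 2
      ≤ ∑ i, fderiv ℝ F κ (Pi.single i 1) * κ i ^ 2 := by
  have : Nonempty ι := ⟨i₀⟩
  obtain ⟨m, hm⟩ := Finite.exists_min κ
  have hmax (i : ι) : fderiv ℝ F κ (Pi.single i 1) ≤ fderiv ℝ F κ (Pi.single m 1) :=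
    fderiv_single_le_fderiv_single_of_quasiconcaveOn hF hd hκ (hperm _ κ hκ)
      (Filter.eventually_of_mem (hopen.mem_nhds hκ) (hFsym _)) (hm i)
  have hsq : κ i₀ ^ 2 ≤ κ m ^ 2 := by
    rcases hi₀ with hneg | hmin
    · exact sq_le_sq.2 (abs_le_abs_of_nonpos hneg.le (hm i₀))
    · rw [le_antisymm (hmin m) (hm i₀)]
  exact one_div_card_mul_sum_mul_le_sum_mul hFmono hmax (fun i => sq_nonneg (κ i)) hsq

/-- let `Γ ⊆ ℝⁿ` be an open convex cone invariant under coordinate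
permutations, and `F ∈ C²(Γ)` positive, symmetric, with `∂F/∂κᵢ > 0` on `Γ` and `log F`
concave on `Γ`.  If `κ ∈ Γ` and `κ_{i₀}` is either negative or the smallest component of
`κ`, then `Σᵢ ∂F/∂κᵢ(κ)·κᵢ² ≥ (1/n)·(Σᵢ ∂F/∂κᵢ(κ))·κ_{i₀}²`. -/
theorem stmt12 {n : ℕ} (Γ : Set (Fin n → ℝ)) (hopen : IsOpen Γ) (hconv : Convex ℝ Γ)
    (hcone : ∀ κ ∈ Γ, ∀ t : ℝ, 0 < t → t • κ ∈ Γ)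
    (hperm : ∀ σ : Equiv.Perm (Fin n), ∀ κ ∈ Γ, (κ ∘ σ) ∈ Γ)
    (F : (Fin n → ℝ) → ℝ) (hF : ContDiffOn ℝ 2 F Γ)
    (hFpos : ∀ κ ∈ Γ, 0 < F κ)
    (hFsym : ∀ σ : Equiv.Perm (Fin n), ∀ κ ∈ Γ, F (κ ∘ σ) = F κ)
    (hFmono : ∀ κ ∈ Γ, ∀ i, 0 < fderiv ℝ F κ (Pi.single i 1))
    (hlog : ConcaveOn ℝ Γ (fun κ => Real.log (F κ)))
    (κ : Fin n → ℝ) (hκ : κ ∈ Γ) (i₀ : Fin n)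
    (hi₀ : κ i₀ < 0 ∨ ∀ j, κ i₀ ≤ κ j) :
    (1 / (n : ℝ)) * (∑ i, fderiv ℝ F κ (Pi.single i 1)) * κ i₀ ^ 2
      ≤ ∑ i, fderiv ℝ F κ (Pi.single i 1) * κ i ^ 2 := by
  have hd : DifferentiableAt ℝ F κ :=
    (hF.contDiffAt (hopen.mem_nhds hκ)).differentiableAt two_ne_zero
  simpa only [Fintype.card_fin] using stmt12_general hopen hperm hFsym
    (quasiconcaveOn_of_concaveOn_log hFpos hlog) hκ hd (fun i => (hFmono κ hκ i).le) hi₀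
end
end

section
/- The cone Γ₂ is convex, and the function κ ↦ H₂(κ)^{1/2} is concave on Γ₂. -/
noncomputable section

/-!
`H₂` has the form `ℓ² - p²` with `ℓ = H/√2` linear and `p = |·|/√2` a seminorm. The set
`{ℓ² > p²}` is the union of the convex cones `{p < ℓ}` and `{p < -ℓ}`, separated by the hyperplane
`ℓ = 0`, so its components are these cones. On `{p < ℓ}` the function `√(ℓ² - p²)` is positively
homogeneous, and it is superadditive: `p` is subadditive, and the numbers `z = s + i√(a² - s²)`,
`w = t + i√(b² - t²)` satisfy `|z + w| ≤ |z| + |w| = a + b`.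
-/

lemma sqrt_sq_sub_sq_add_le {a b s t : ℝ} (hs : |s| ≤ a) (ht : |t| ≤ b) :
    √(a ^ 2 - s ^ 2) + √(b ^ 2 - t ^ 2) ≤ √((a + b) ^ 2 - (s + t) ^ 2) := by
  have norm_eq {c r : ℝ} (hr : |r| ≤ c) : ‖(⟨r, √(c ^ 2 - r ^ 2)⟩ : ℂ)‖ = c := by
    have hc : 0 ≤ c := (abs_nonneg r).trans hr
    have hrc : r ^ 2 ≤ c ^ 2 := sq_le_sq.2 (hr.trans (le_abs_self c))
    rw [Complex.norm_eq_sqrt_sq_add_sq, Real.sq_sqrt (sub_nonneg.2 hrc), add_sub_cancel,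
      Real.sqrt_sq hc]
  have triangle := norm_add_le (⟨s, √(a ^ 2 - s ^ 2)⟩ : ℂ) ⟨t, √(b ^ 2 - t ^ 2)⟩
  rw [norm_eq hs, norm_eq ht, Complex.norm_eq_sqrt_sq_add_sq, Real.sqrt_le_iff] at triangle
  exact Real.le_sqrt_of_sq_le (le_sub_iff_add_le'.2 triangle.2)

section LorentzForm

variable {E : Type*} [AddCommGroup E] [Module ℝ E] {p : Seminorm ℝ E} {ℓ : E →ₗ[ℝ] ℝ}

/-- The form `ℓ² - p²`, generalizing a quadratic form of Lorentzian signature: the spatial part `p`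
may be any seminorm. -/
def lorentzForm (p : Seminorm ℝ E) (ℓ : E →ₗ[ℝ] ℝ) (x : E) : ℝ := ℓ x ^ 2 - p x ^ 2

/-- The open cone of future-directed timelike vectors of `lorentzForm p ℓ`. -/
def forwardCone (p : Seminorm ℝ E) (ℓ : E →ₗ[ℝ] ℝ) : ConvexCone ℝ E where
  carrier := {x | p x < ℓ x}
  smul_mem' c hc x hx := by
    simpa [map_smul_eq_mul, abs_of_pos hc] using mul_lt_mul_of_pos_left hx hc
  add_mem' x hx y hy := by
    simpa using (map_add_le_add p x y).trans_lt (add_lt_add hx hy)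

lemma mem_forwardCone {x : E} : x ∈ forwardCone p ℓ ↔ p x < ℓ x := Iff.rfl

lemma mem_forwardCone_iff_lorentzForm_pos {x : E} :
    x ∈ forwardCone p ℓ ↔ 0 < lorentzForm p ℓ x ∧ 0 < ℓ x := by
  have hp := apply_nonneg p x
  rw [mem_forwardCone, lorentzForm, sub_pos]
  exact ⟨fun h => ⟨pow_lt_pow_left₀ h hp two_ne_zero, hp.trans_lt h⟩,
    fun h => lt_of_pow_lt_pow_left₀ 2 h.2.le h.1⟩

lemma sqrt_lorentzForm_smul {c : ℝ} (hc : 0 ≤ c) (x : E) :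
    √(lorentzForm p ℓ (c • x)) = c * √(lorentzForm p ℓ x) := by
  have hsq : lorentzForm p ℓ (c • x) = c ^ 2 * lorentzForm p ℓ x := by
    simp only [lorentzForm, map_smul, smul_eq_mul, map_smul_eq_mul, Real.norm_eq_abs,
      mul_pow, sq_abs]
    ring
  rw [hsq, Real.sqrt_mul (sq_nonneg c), Real.sqrt_sq hc]

lemma sqrt_lorentzForm_add_le {x y : E} (hx : p x ≤ ℓ x) (hy : p y ≤ ℓ y) :
    √(lorentzForm p ℓ x) + √(lorentzForm p ℓ y) ≤ √(lorentzForm p ℓ (x + y)) := by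
  calc √(ℓ x ^ 2 - p x ^ 2) + √(ℓ y ^ 2 - p y ^ 2)
      ≤ √((ℓ x + ℓ y) ^ 2 - (p x + p y) ^ 2) :=
        sqrt_sq_sub_sq_add_le (by rwa [abs_of_nonneg (apply_nonneg p x)])
          (by rwa [abs_of_nonneg (apply_nonneg p y)])
    _ ≤ √(ℓ (x + y) ^ 2 - p (x + y) ^ 2) := by
        rw [map_add ℓ]
        gcongr
        exact map_add_le_add p x y

lemma concaveOn_sqrt_lorentzForm (p : Seminorm ℝ E) (ℓ : E →ₗ[ℝ] ℝ) :
    ConcaveOn ℝ (forwardCone p ℓ : Set E) fun x => √(lorentzForm p ℓ x) := by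
  refine concaveOn_iff_forall_pos.2 ⟨(forwardCone p ℓ).convex, fun x hx y hy a b ha hb _ => ?_⟩
  rw [smul_eq_mul, smul_eq_mul, ← sqrt_lorentzForm_smul ha.le, ← sqrt_lorentzForm_smul hb.le]
  exact sqrt_lorentzForm_add_le (mem_forwardCone.1 <| (forwardCone p ℓ).smul_mem ha hx).le
    (mem_forwardCone.1 <| (forwardCone p ℓ).smul_mem hb hy).le

lemma ne_zero_of_lorentzForm_pos {x : E} (hx : 0 < lorentzForm p ℓ x) : ℓ x ≠ 0 := by
  intro h
  rw [lorentzForm, h] at hx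
  linarith [sq_nonneg (p x)]

variable [TopologicalSpace E] [IsTopologicalAddGroup E] [ContinuousSMul ℝ E]

lemma connectedComponentIn_lorentzForm_pos_eq_forwardCone (hℓ : Continuous ℓ) {e : E}
    (he : e ∈ forwardCone p ℓ) :
    connectedComponentIn {x | 0 < lorentzForm p ℓ x} e = forwardCone p ℓ := by
  have he' := mem_forwardCone_iff_lorentzForm_pos.1 he
  have pos_on_component := connectedComponentIn_subset {x | 0 < lorentzForm p ℓ x} e
  apply Set.Subset.antisymm
  · have ℓ_pos : connectedComponentIn {x | 0 < lorentzForm p ℓ x} e ⊆ {x | 0 < ℓ x} :=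
      isPreconnected_connectedComponentIn.subset_left_of_subset_union
        (isOpen_lt continuous_const hℓ) (isOpen_lt hℓ continuous_const)
        (Set.disjoint_left.2 fun x (hpos : 0 < ℓ x) (hneg : ℓ x < 0) => hpos.asymm hneg)
        (fun x hx => (ne_zero_of_lorentzForm_pos (pos_on_component hx)).symm.lt_or_gt)
        ⟨e, mem_connectedComponentIn he'.1, he'.2⟩
    exact fun x hx => mem_forwardCone_iff_lorentzForm_pos.2 ⟨pos_on_component hx, ℓ_pos hx⟩
  · exact (forwardCone p ℓ).convex.isPreconnected.subset_connectedComponentIn he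
      fun x hx => (mem_forwardCone_iff_lorentzForm_pos.1 hx).1

theorem stmt17_general {p : Seminorm ℝ E} {ℓ : E →ₗ[ℝ] ℝ} (hℓ : Continuous ℓ) {e : E}
    (he : p e < ℓ e) :
    Convex ℝ (connectedComponentIn {x | 0 < lorentzForm p ℓ x} e) ∧
      ConcaveOn ℝ (connectedComponentIn {x | 0 < lorentzForm p ℓ x} e)
        fun x => √(lorentzForm p ℓ x) := by
  rw [connectedComponentIn_lorentzForm_pos_eq_forwardCone hℓ he]
  exact ⟨(forwardCone p ℓ).convex, concaveOn_sqrt_lorentzForm p ℓ⟩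

end LorentzForm

section ElementarySymmetric

variable {n : ℕ}

/-- The linear form `H/√2`, the temporal part of `H₂`. -/
def scaledSum (n : ℕ) : (Fin n → ℝ) →ₗ[ℝ] ℝ := (√2)⁻¹ • ∑ i, LinearMap.proj i

/-- The seminorm `|κ|/√2`, with `|κ|` the Euclidean norm: the spatial part of `H₂`. It is pulled
back from `EuclideanSpace` because the norm of `Fin n → ℝ` is the supremum norm. -/
def scaledEuclideanSeminorm (n : ℕ) : Seminorm ℝ (Fin n → ℝ) :=
  (normSeminorm ℝ (EuclideanSpace ℝ (Fin n))).comp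
    ((√2)⁻¹ • (WithLp.linearEquiv 2 ℝ (Fin n → ℝ)).symm.toLinearMap)

lemma scaledSum_apply (κ : Fin n → ℝ) : scaledSum n κ = (√2)⁻¹ * Hsum κ := by
  simp [scaledSum, Hsum]

lemma continuous_scaledSum : Continuous (scaledSum n) :=
  LinearMap.continuous_of_finiteDimensional _

lemma scaledEuclideanSeminorm_sq (κ : Fin n → ℝ) :
    scaledEuclideanSeminorm n κ ^ 2 = (∑ i, κ i ^ 2) / 2 := by
  calc scaledEuclideanSeminorm n κ ^ 2 = ‖(√2)⁻¹ • WithLp.toLp 2 κ‖ ^ 2 := rfl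
    _ = (∑ i, κ i ^ 2) / 2 := by
        rw [norm_smul, mul_pow, EuclideanSpace.real_norm_sq_eq, Real.norm_eq_abs, sq_abs, inv_pow,
          Real.sq_sqrt zero_le_two, inv_mul_eq_div]

lemma H2_eq_lorentzForm (κ : Fin n → ℝ) :
    H2 κ = lorentzForm (scaledEuclideanSeminorm n) (scaledSum n) κ := by
  rw [lorentzForm, scaledEuclideanSeminorm_sq, scaledSum_apply, mul_pow, inv_pow,
    Real.sq_sqrt zero_le_two, H2]
  ring

lemma Hsum_one : Hsum (fun _ : Fin n => 1) = n := by
  simp [Hsum]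

lemma H2_one : H2 (fun _ : Fin n => 1) = n * (n - 1) / 2 := by
  rw [H2, Hsum_one, Fin.sum_const, one_pow, nsmul_one]
  ring

lemma one_mem_forwardCone (hn : 2 ≤ n) :
    (fun _ => 1) ∈ forwardCone (scaledEuclideanSeminorm n) (scaledSum n) := by
  have n_pos : (0 : ℝ) < n := by exact_mod_cast zero_lt_two.trans_le hn
  have n_sub_one_pos : (0 : ℝ) < n - 1 := sub_pos.2 (by exact_mod_cast hn)
  rw [mem_forwardCone_iff_lorentzForm_pos, ← H2_eq_lorentzForm, H2_one, scaledSum_apply, Hsum_one]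
  exact ⟨half_pos (mul_pos n_pos n_sub_one_pos),
    mul_pos (inv_pos.2 (Real.sqrt_pos.2 zero_lt_two)) n_pos⟩

end ElementarySymmetric

/-- the cone `Γ₂` is convex and `κ ↦ H₂(κ)^{1/2}` is concave on `Γ₂`. -/
theorem stmt17 {n : ℕ} (hn : 2 ≤ n) :
    Convex ℝ (Gamma2 n) ∧ ConcaveOn ℝ (Gamma2 n) (fun κ => Real.sqrt (H2 κ)) := by
  simpa only [Gamma2, H2_eq_lorentzForm] using
    stmt17_general continuous_scaledSum (one_mem_forwardCone hn)
end
end
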